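/- arXiv:2111.12876 — 5 statements merged into one kernel-verified Lean document; each statement's English description precedes it below -/
import Mathlib

section
/- Let d ≥ 1, m > 0, b ≥ 0, and let f : ℝ^d → ℝ be differentiable and (m,b)-dissipative. Then f is coercive: for every c ∈ ℝ there exists r > 0 such that f(x) ≥ c whenever ‖x‖ ≥ r. -/
open RealInnerProductSpace

/-!
Along a ray `s ↦ f (s • u)` with `‖u‖ = 1`, dissipativity bounds the derivative `h'` by
`s * h' s ≥ m * s ^ 2 - b`. Once `s ≥ R := 1 + 2 * b / m`, the right-hand side is at least
`m / 2 * s`, so `h' ≥ m / 2` and `f` grows at least linearly along the ray beyond radius `R`.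
The starting value `f (R • u)` is bounded below uniformly in `u`, since the closed ball of radius
`R` is compact.
-/

/-- A differentiable `(m, b)`-dissipative function is coercive. -/
theorem dissipative_coercive
    (d : ℕ) (hd : 1 ≤ d) (m b : ℝ) (hm : 0 < m) (hb : 0 ≤ b)
    (f : EuclideanSpace ℝ (Fin d) → ℝ)
    (hdiff : Differentiable ℝ f)
    (hdiss : ∀ x : EuclideanSpace ℝ (Fin d), ⟪x, gradient f x⟫ ≥ m * ‖x‖ ^ 2 - b) :
    ∀ c : ℝ, ∃ r : ℝ, 0 < r ∧ ∀ x : EuclideanSpace ℝ (Fin d), r ≤ ‖x‖ → c ≤ f x := by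
  intro c
  obtain ⟨R, hR⟩ : ∃ R : ℝ, R = 1 + 2 * b / m := ⟨_, rfl⟩
  have hR1 : 1 ≤ R := by
    have : 0 ≤ 2 * b / m := by positivity
    linarith
  have hmR : 2 * b ≤ m * R := by
    rw [hR]
    field_simp
    linarith
  obtain ⟨K, hK⟩ := (isCompact_closedBall (0 : EuclideanSpace ℝ (Fin d)) R).bddBelow_image
    hdiff.continuous.continuousOn
  have hr : 0 ≤ 2 * |c - K| / m := by positivity
  refine ⟨R + 2 * |c - K| / m, by linarith, fun x hx => ?_⟩
  have hxR : R ≤ ‖x‖ := by linarith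
  have hx0 : ‖x‖ ≠ 0 := by linarith
  set u : EuclideanSpace ℝ (Fin d) := ‖x‖⁻¹ • x with hu
  have hu1 : ‖u‖ = 1 := by
    rw [hu, norm_smul, norm_inv, norm_norm, inv_mul_cancel₀ hx0]
  have hxu : ‖x‖ • u = x := smul_inv_smul₀ hx0 x
  have hderiv : ∀ s : ℝ, HasDerivAt (fun t : ℝ => f (t • u)) ⟪gradient f (s • u), u⟫ s := by
    intro s
    have h1 : HasDerivAt (fun t : ℝ => t • u) u s := by
      simpa using (hasDerivAt_id s).smul_const u
    exact
      (hdiff (s • u)).hasGradientAt.hasFDerivAt.comp_hasDerivAt s h1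
  have hslope : ∀ s : ℝ, R ≤ s → m / 2 ≤ ⟪gradient f (s • u), u⟫ := by
    intro s hs
    have hs0 : 0 < s := by linarith
    have h := hdiss (s • u)
    rw [norm_smul, hu1, mul_one, Real.norm_eq_abs, sq_abs, real_inner_smul_left,
      real_inner_comm] at h
    have hms : 2 * b ≤ m * s := hmR.trans (by gcongr)
    have hss : m * s ≤ m * s ^ 2 := by nlinarith
    exact le_of_mul_le_mul_left (by linarith : s * (m / 2) ≤ s * _) hs0
  have hgrow := (convex_Ici R).mul_sub_le_image_sub_of_le_deriv
    (fun s _ => (hderiv s).continuousAt.continuousWithinAt)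
    (fun s _ => (hderiv s).differentiableAt.differentiableWithinAt)
    (C := m / 2)
    (fun s hs => by
      rw [(hderiv s).deriv]
      exact hslope s (interior_subset hs))
    R Set.self_mem_Ici ‖x‖ hxR hxR
  simp only [hxu] at hgrow
  have hKR : K ≤ f (R • u) := by
    refine hK (Set.mem_image_of_mem f ?_)
    rw [mem_closedBall_zero_iff, norm_smul, hu1, mul_one, Real.norm_eq_abs,
      abs_of_nonneg (by linarith)]
  have hfar : |c - K| ≤ m / 2 * (‖x‖ - R) := by
    have h : 2 * |c - K| / m ≤ ‖x‖ - R := by linarith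
    rw [div_le_iff₀ hm] at h
    linarith
  linarith [le_abs_self (c - K)]
end

section
/- Let d ≥ 1, m > 0, b ≥ 0, and let f : ℝ^d → ℝ be differentiable and (m,b)-dissipative. Then f attains a global minimum at some point x* ∈ ℝ^d, and every global minimizer x* satisfies ‖x*‖ ≤ √(b/m). -/
/-!
Dissipativity says that the radial derivative of `f` is nonnegative outside the closed ball of
radius `√(b/m)`. Hence `f` does not increase when a point outside this ball is moved radially onto
its boundary, and a minimizer of `f` over the (compact) ball is a global one. At any global
minimizer the gradient vanishes, so dissipativity there reads `0 ≥ m ‖x‖² - b`.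
-/

open RealInnerProductSpace

/-- If the gradient pairs nonnegatively with the position vector outside the closed ball of radius
`R`, then moving an outside point radially onto the sphere of radius `R` does not increase `f`. -/
lemma radial_retraction_le {E : Type*} [NormedAddCommGroup E] [InnerProductSpace ℝ E]
    [CompleteSpace E] {f : E → ℝ} (hdiff : Differentiable ℝ f) {R : ℝ} (hR : 0 ≤ R)
    (hgrad : ∀ x : E, R < ‖x‖ → 0 ≤ ⟪x, gradient f x⟫) {x : E} (hx : R < ‖x‖) :
    f ((R / ‖x‖) • x) ≤ f x := by
  have hx0 : 0 < ‖x‖ := hR.trans_lt hx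
  have hder (t : ℝ) : HasDerivAt (fun s : ℝ => f (s • x)) ⟪x, gradient f (t • x)⟫ t := by
    have h1 : HasDerivAt (fun s : ℝ => s • x) x t := by
      simpa using (hasDerivAt_id t).smul_const x
    have h2 := (hdiff (t • x)).hasFDerivAt.comp_hasDerivAt t h1
    rwa [← inner_gradient_left, real_inner_comm] at h2
  have hmono : MonotoneOn (fun s : ℝ => f (s • x)) (Set.Icc (R / ‖x‖) 1) := by
    refine monotoneOn_of_deriv_nonneg (convex_Icc _ _)
      (fun t _ => (hder t).continuousAt.continuousWithinAt)
      (fun t _ => (hder t).differentiableAt.differentiableWithinAt) fun t ht => ?_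
    rw [interior_Icc] at ht
    have ht0 : 0 < t := (div_nonneg hR hx0.le).trans_lt ht.1
    have hnorm : R < ‖t • x‖ := by
      rw [norm_smul, Real.norm_of_nonneg ht0.le]
      exact (div_lt_iff₀ hx0).1 ht.1
    have h := hgrad _ hnorm
    rw [real_inner_smul_left] at h
    rw [(hder t).deriv]
    exact nonneg_of_mul_nonneg_right h ht0
  have hle : R / ‖x‖ ≤ 1 := (div_le_one hx0).2 hx.le
  simpa using hmono (Set.left_mem_Icc.2 hle) (Set.right_mem_Icc.2 hle) hle

/-- A differentiable `(m, b)`-dissipative function attains a global minimum,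
and every global minimizer lies in the closed ball of radius `√(b/m)`. -/
theorem dissipative_global_min
    (d : ℕ) (hd : 1 ≤ d) (m b : ℝ) (hm : 0 < m) (hb : 0 ≤ b)
    (f : EuclideanSpace ℝ (Fin d) → ℝ)
    (hdiff : Differentiable ℝ f)
    (hdiss : ∀ x : EuclideanSpace ℝ (Fin d), ⟪x, gradient f x⟫ ≥ m * ‖x‖ ^ 2 - b) :
    (∃ xstar : EuclideanSpace ℝ (Fin d), ∀ x, f xstar ≤ f x) ∧
    (∀ xstar : EuclideanSpace ℝ (Fin d), (∀ x, f xstar ≤ f x) →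
      ‖xstar‖ ≤ Real.sqrt (b / m)) := by
  constructor
  · have hR : 0 ≤ Real.sqrt (b / m) := Real.sqrt_nonneg _
    obtain ⟨y, -, hy⟩ := (isCompact_closedBall (0 : EuclideanSpace ℝ (Fin d))
      (Real.sqrt (b / m))).exists_isMinOn ⟨0, Metric.mem_closedBall_self hR⟩
      hdiff.continuous.continuousOn
    refine ⟨y, fun x => ?_⟩
    rcases le_or_gt ‖x‖ (Real.sqrt (b / m)) with hx | hx
    · exact hy (mem_closedBall_zero_iff.2 hx)
    · have hx0 : 0 < ‖x‖ := hR.trans_lt hx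
      refine le_trans (hy (mem_closedBall_zero_iff.2 ?_))
        (radial_retraction_le hdiff hR (fun z hz => ?_) hx)
      · rw [norm_smul, Real.norm_of_nonneg (div_nonneg hR hx0.le), div_mul_cancel₀ _ hx0.ne']
      · have h1 : b / m < ‖z‖ ^ 2 := (Real.sqrt_lt' (hR.trans_lt hz)).1 hz
        rw [div_lt_iff₀ hm] at h1
        linarith [hdiss z]
  · intro y hy
    have hmin : IsLocalMin f y := Filter.Eventually.of_forall hy
    have h := hdiss y
    rw [real_inner_comm, inner_gradient_left, hmin.fderiv_eq_zero,
      ContinuousLinearMap.zero_apply] at h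
    apply Real.le_sqrt_of_sq_le
    rw [le_div_iff₀ hm]
    linarith
end

section
/- Let d ≥ 1, m > 0, b ≥ 0, M > 0, and let f : ℝ^d → ℝ be differentiable, (m,b)-dissipative, and M-smooth. Then the gradient of f at the origin satisfies ‖∇f(0)‖ ≤ M·√(b/m). -/
/-!
A minimiser `z` of `f` over a closed ball centred at `0`, of radius `> √(b/m)`, is a critical
point. Indeed `f` does not decrease from `z` towards the centre, so `⟪z, ∇f z⟫ ≤ 0`, and
dissipativity gives `‖z‖ ≤ √(b/m)`: the minimiser is interior and `∇f z = 0`. Smoothness between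
`0` and `z` then yields `‖∇f 0‖ ≤ M ‖z‖ ≤ M √(b/m)`.
-/

open RealInnerProductSpace

/-- For a differentiable, `(m, b)`-dissipative, `M`-smooth function,
the gradient at the origin satisfies `‖∇f(0)‖ ≤ M √(b/m)`. -/
theorem dissipative_smooth_grad_at_zero
    (d : ℕ) (hd : 1 ≤ d) (m b M : ℝ) (hm : 0 < m) (hb : 0 ≤ b) (hM : 0 < M)
    (f : EuclideanSpace ℝ (Fin d) → ℝ)
    (hdiff : Differentiable ℝ f)
    (hdiss : ∀ x : EuclideanSpace ℝ (Fin d), ⟪x, gradient f x⟫ ≥ m * ‖x‖ ^ 2 - b)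
    (hsmooth : ∀ x y : EuclideanSpace ℝ (Fin d),
      ‖gradient f x - gradient f y‖ ≤ M * ‖x - y‖) :
    ‖gradient f 0‖ ≤ M * Real.sqrt (b / m) := by
  set R := Real.sqrt (b / m) with hR
  have hR0 : 0 ≤ R := Real.sqrt_nonneg _
  have h0 : (0 : EuclideanSpace ℝ (Fin d)) ∈ Metric.closedBall 0 (R + 1) :=
    Metric.mem_closedBall_self (by positivity)
  obtain ⟨z, hz, hmin⟩ :=
    (isCompact_closedBall (0 : EuclideanSpace ℝ (Fin d)) (R + 1)).exists_isMinOn ⟨0, h0⟩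
      hdiff.continuous.continuousOn
  -- First-order optimality in the feasible direction `0 - z`.
  have hdir : 0 ≤ fderiv ℝ f z (0 - z) :=
    hmin.localize.hasFDerivWithinAt_nonneg (hdiff z).hasFDerivAt.hasFDerivWithinAt
      (sub_mem_posTangentConeAt_of_segment_subset
        ((convex_closedBall _ _).segment_subset hz h0))
  have hinner : ⟪z, gradient f z⟫ = fderiv ℝ f z z := by
    rw [real_inner_comm, gradient, InnerProductSpace.toDual_symm_apply]
  have hzR : ‖z‖ ≤ R := by
    apply Real.le_sqrt_of_sq_le
    rw [le_div_iff₀ hm]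
    have := hdiss z
    rw [zero_sub, map_neg] at hdir
    linarith
  have hloc : IsLocalMin f z := by
    apply hmin.isLocalMin
    apply Metric.closedBall_mem_nhds_of_mem
    rw [mem_ball_zero_iff]
    linarith
  have hgrad : gradient f z = 0 := by
    rw [gradient, hloc.fderiv_eq_zero, map_zero]
  have := hsmooth 0 z
  rw [hgrad, sub_zero, zero_sub, norm_neg] at this
  exact this.trans (mul_le_mul_of_nonneg_left hzR hM.le)
end

section
/- Fix d ≥ 1, R > 0, φ ∈ (0,1], ε > 0, and g : [0,∞) → [0,∞) concave, nondecreasing, with g(r) = g(R) for all r ≥ R and φ·r ≤ g(r) ≤ r for all r ∈ [0,R]. Define ρ(x,y) := g(‖x−y‖)·(1 + 2ε + ε‖x‖² + ε‖y‖²). Then ρ satisfies the weak triangle inequality: for all x, y, z ∈ ℝ^d, ρ(x,y) ≤ ρ(x,z) + 2·(1 + (R/φ)·max(εR, 1))·ρ(z,y). -/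
/-!
Write `W(x,y) = 1 + 2ε + ε‖x‖² + ε‖y‖²`, `u = ‖x - z‖`, `v = ‖z - y‖`. The function `g` is
subadditive (concave with `g 0 ≥ 0`) and bounded by `g R ≤ R`, a value it attains on `[R, ∞)`.
Two estimates carry the proof, with `T = W(z,y) - 1`, `P = R / φ` and `C = 2(1 + P max(εR, 1))`.

* `weight_le`: if `u ≤ R` then `‖x‖² ≤ 2‖z‖² + 2R²`, so `W(x,y) + 2PT ≤ C W(z,y)`.
* `weight_diff_le`: if `v ≤ R` then `W(x,y) - W(x,z) = ε(‖y‖² - ‖z‖²) ≤ εv(‖y‖ + ‖z‖) ≤ vT/2`, and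
  `φ v ≤ g v` gives `g u (W(x,y) - W(x,z)) ≤ P (g v) T / 2`.

The inequality follows by splitting on whether `u` and `v` exceed `R`: when both are below `R`,
subadditivity combines the two estimates; when one of them is at least `R`, the corresponding value
of `g` is maximal and already dominates `g ‖x - y‖`.
-/


open RealInnerProductSpace

theorem concave_subadditive {g : ℝ → ℝ} (hg : ConcaveOn ℝ (Set.Ici (0 : ℝ)) g)
    (h0 : 0 ≤ g 0) {u v : ℝ} (hu : 0 ≤ u) (hv : 0 ≤ v) : g (u + v) ≤ g u + g v := by
  rcases (add_nonneg hu hv).eq_or_lt with h | h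
  · have hu0 : u = 0 := by linarith
    have hv0 : v = 0 := by linarith
    subst hu0 hv0
    simpa using h0
  -- Both `u` and `v` are convex combinations of `0` and `u + v`.
  have key : ∀ p q : ℝ, 0 ≤ p → 0 ≤ q → p + q = u + v →
      p / (u + v) * g (u + v) ≤ g p := by
    intro p q hp hq hpq
    have hsum : p / (u + v) + q / (u + v) = 1 := by
      rw [← add_div, hpq, div_self h.ne']
    have hc := hg.2 (Set.mem_Ici.2 h.le) (Set.mem_Ici.2 le_rfl)
      (div_nonneg hp h.le) (div_nonneg hq h.le) hsum
    simp only [smul_eq_mul, mul_zero, add_zero] at hc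
    rw [div_mul_cancel₀ _ h.ne'] at hc
    have := mul_nonneg (div_nonneg hq h.le) h0
    linarith
  have h1 := key u v hu hv rfl
  have h2 := key v u hv hu (add_comm _ _)
  have h3 : u / (u + v) * g (u + v) + v / (u + v) * g (u + v) = g (u + v) := by
    field_simp
  linarith

/-- When `x` is within `R` of `z` (here `a`, `b`, `c` are the norms of `x`, `y`, `z`), the weight at
`(x, y)` is controlled by the weight at `(z, y)`, with room left over for the term `2 P T`. -/
theorem weight_le {R ε P M a b c u : ℝ} (hR : 0 < R) (hε : 0 < ε) (hP : R ≤ P)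
    (hM1 : 1 ≤ M) (hM : ε * R ≤ M) (ha : 0 ≤ a) (hu : u ≤ R) (hac : a ≤ c + u) :
    (1 + 2 * ε + ε * a ^ 2 + ε * b ^ 2) + 2 * P * (2 * ε + ε * c ^ 2 + ε * b ^ 2)
      ≤ 2 * (1 + P * M) * (1 + 2 * ε + ε * c ^ 2 + ε * b ^ 2) := by
  have hP0 : 0 < P := hR.trans_le hP
  have hT : 0 ≤ 2 * ε + ε * c ^ 2 + ε * b ^ 2 := by positivity
  have ha2 : a ^ 2 ≤ 2 * c ^ 2 + 2 * R ^ 2 := by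
    have : a ^ 2 ≤ (c + R) ^ 2 := pow_le_pow_left₀ ha (by linarith) 2
    nlinarith [sq_nonneg (c - R)]
  have h1 : ε * a ^ 2 ≤ ε * (2 * c ^ 2 + 2 * R ^ 2) := mul_le_mul_of_nonneg_left ha2 hε.le
  have h2 : R * (ε * R) ≤ P * M := mul_le_mul hP hM (by positivity) hP0.le
  have h3 : P * (2 * ε + ε * c ^ 2 + ε * b ^ 2) ≤ P * M * (2 * ε + ε * c ^ 2 + ε * b ^ 2) :=
    mul_le_mul_of_nonneg_right (le_mul_of_one_le_right hP0.le hM1) hT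
  have h4 : 0 ≤ ε * b ^ 2 := by positivity
  nlinarith

/-- Replacing `z` by `y` in the weight costs at most a multiple of `k = g ‖z - y‖`
(here `m` is `g ‖x - z‖` and `b`, `c` are the norms of `y`, `z`). -/
theorem weight_diff_le {R ε P b c v m k : ℝ} (hε : 0 < ε) (hb : 0 ≤ b) (hc : 0 ≤ c)
    (hm0 : 0 ≤ m) (hmR : m ≤ R) (hv : 0 ≤ v) (hbc : b ≤ c + v) (hk : R * v ≤ P * k) :
    m * (ε * (b ^ 2 - c ^ 2)) ≤ P * k * ((2 * ε + ε * c ^ 2 + ε * b ^ 2) / 2) := by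
  have h1 : ε * (b ^ 2 - c ^ 2) ≤ v * (ε * (b + c)) := by
    have : 0 ≤ (ε * (b + c)) * (c + v - b) := mul_nonneg (by positivity) (by linarith)
    nlinarith
  have h2 : ε * (b + c) ≤ (2 * ε + ε * c ^ 2 + ε * b ^ 2) / 2 := by
    nlinarith [mul_nonneg hε.le (sq_nonneg (b - 1)), mul_nonneg hε.le (sq_nonneg (c - 1))]
  have h3 : m * v ≤ P * k := (mul_le_mul_of_nonneg_right hmR hv).trans hk
  have h4 : 0 ≤ P * k := (mul_nonneg hm0 hv).trans h3
  calc m * (ε * (b ^ 2 - c ^ 2)) ≤ m * (v * (ε * (b + c))) := mul_le_mul_of_nonneg_left h1 hm0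
    _ = m * v * (ε * (b + c)) := by ring
    _ ≤ P * k * ((2 * ε + ε * c ^ 2 + ε * b ^ 2) / 2) :=
      mul_le_mul h3 h2 (by positivity) h4

/-- Weak triangle inequality for the semimetric
`ρ(x,y) = g(‖x−y‖)(1 + 2ε + ε‖x‖² + ε‖y‖²)`. -/
theorem semimetric_weak_triangle
    (d : ℕ) (hd : 1 ≤ d) (R φ ε : ℝ) (hR : 0 < R) (hφ : 0 < φ) (hφ1 : φ ≤ 1)
    (hε : 0 < ε) (g : ℝ → ℝ)
    (hg_nonneg : ∀ r : ℝ, 0 ≤ r → 0 ≤ g r)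
    (hg_concave : ConcaveOn ℝ (Set.Ici (0 : ℝ)) g)
    (hg_mono : MonotoneOn g (Set.Ici (0 : ℝ)))
    (hg_const : ∀ r : ℝ, R ≤ r → g r = g R)
    (hg_bounds : ∀ r : ℝ, r ∈ Set.Icc (0 : ℝ) R → φ * r ≤ g r ∧ g r ≤ r)
    (ρ : EuclideanSpace ℝ (Fin d) → EuclideanSpace ℝ (Fin d) → ℝ)
    (hρ : ∀ x y : EuclideanSpace ℝ (Fin d),
      ρ x y = g ‖x - y‖ * (1 + 2 * ε + ε * ‖x‖ ^ 2 + ε * ‖y‖ ^ 2)) :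
    ∀ x y z : EuclideanSpace ℝ (Fin d),
      ρ x y ≤ ρ x z + 2 * (1 + (R / φ) * max (ε * R) 1) * ρ z y := by
  intro x y z
  simp only [hρ]
  have hP : R ≤ R / φ := by
    rw [le_div_iff₀ hφ]
    nlinarith
  have hP0 : 0 < R / φ := by positivity
  have hM1 : (1 : ℝ) ≤ max (ε * R) 1 := le_max_right _ _
  have hM : ε * R ≤ max (ε * R) 1 := le_max_left _ _
  have hmax : ∀ r : ℝ, 0 ≤ r → g r ≤ g R := by
    intro r hr
    rcases le_total r R with h | h
    · exact hg_mono (Set.mem_Ici.2 hr) (Set.mem_Ici.2 hR.le) h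
    · exact (hg_const r h).le
  have hKR : g R ≤ R := (hg_bounds R ⟨hR.le, le_rfl⟩).2
  have hsub : g ‖x - y‖ ≤ g ‖x - z‖ + g ‖z - y‖ :=
    (hg_mono (Set.mem_Ici.2 (norm_nonneg _)) (Set.mem_Ici.2 (by positivity))
      (norm_sub_le_norm_sub_add_norm_sub x z y)).trans
      (concave_subadditive hg_concave (hg_nonneg 0 le_rfl) (norm_nonneg _) (norm_nonneg _))
  have hGK := hmax ‖x - y‖ (norm_nonneg _)
  have hmK := hmax ‖x - z‖ (norm_nonneg _)
  have hm0 := hg_nonneg ‖x - z‖ (norm_nonneg _)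
  have hk0 := hg_nonneg ‖z - y‖ (norm_nonneg _)
  have hac : ‖x‖ ≤ ‖z‖ + ‖x - z‖ := by
    have := norm_sub_norm_le x z
    linarith
  have hbc : ‖y‖ ≤ ‖z‖ + ‖z - y‖ := by
    have := norm_sub_norm_le y z
    rw [norm_sub_rev y z] at this
    linarith
  have hcu := hg_const ‖x - z‖
  have hcv := hg_const ‖z - y‖
  have hvk : ‖z - y‖ ≤ R → R * ‖z - y‖ ≤ R / φ * g ‖z - y‖ := by
    intro h
    have h1 := (hg_bounds ‖z - y‖ ⟨norm_nonneg _, h⟩).1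
    rw [div_mul_eq_mul_div, le_div_iff₀ hφ]
    nlinarith
  have hW := weight_le (R := R) (ε := ε) (a := ‖x‖) (b := ‖y‖) (c := ‖z‖) (u := ‖x - z‖)
    hR hε hP hM1 hM (norm_nonneg _)
  have hD := weight_diff_le (R := R) (ε := ε) (P := R / φ) (b := ‖y‖) (c := ‖z‖)
    (k := g ‖z - y‖) hε
    (norm_nonneg _) (norm_nonneg _) hm0 (hmK.trans hKR) (norm_nonneg (z - y)) hbc
  have hxz0 : 0 ≤ 1 + 2 * ε + ε * ‖x‖ ^ 2 + ε * ‖z‖ ^ 2 := by positivity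
  have hxy0 : 0 ≤ 1 + 2 * ε + ε * ‖x‖ ^ 2 + ε * ‖y‖ ^ 2 := by positivity
  have hT0 : 0 ≤ 2 * ε + ε * ‖z‖ ^ 2 + ε * ‖y‖ ^ 2 := by positivity
  have hx0 : 0 ≤ ε * ‖x‖ ^ 2 := by positivity
  have hz0 : 0 ≤ ε * ‖z‖ ^ 2 := by positivity
  generalize max (ε * R) 1 = M at *
  generalize R / φ = P at *
  generalize g ‖x - y‖ = G at *
  generalize g ‖x - z‖ = m at *
  generalize g ‖z - y‖ = k at *
  have hPM : P ≤ P * M := le_mul_of_one_le_right hP0.le hM1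
  have hyz : (2 * P + 1) * (1 + (2 * ε + ε * ‖z‖ ^ 2 + ε * ‖y‖ ^ 2))
      ≤ 2 * (1 + P * M) * (1 + 2 * ε + ε * ‖z‖ ^ 2 + ε * ‖y‖ ^ 2) := by
    nlinarith [mul_le_mul_of_nonneg_right hPM (by linarith :
      0 ≤ 1 + (2 * ε + ε * ‖z‖ ^ 2 + ε * ‖y‖ ^ 2))]
  have hT : 0 ≤ P * k * (2 * ε + ε * ‖z‖ ^ 2 + ε * ‖y‖ ^ 2) := by positivity
  have hk_yz := mul_le_mul_of_nonneg_left hyz hk0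
  rcases le_total R ‖x - z‖ with hu | hu
  · have hmeq := hcu hu
    have hG := mul_le_mul_of_nonneg_right (hGK.trans hmeq.ge) hxy0
    rcases le_total R ‖z - y‖ with hv | hv
    · have hkm : k = m := (hcv hv).trans hmeq.symm
      subst hkm
      have h1 : 0 ≤ k * (1 + 2 * ε + 2 * (ε * ‖z‖ ^ 2)) := by positivity
      have h2 : 0 ≤ k * P := by positivity
      linarith
    · have h1 : 0 ≤ k * P := by positivity
      have h2 := mul_nonneg hk0 hT0
      linarith [hD (hvk hv)]
  · have hk_W := mul_le_mul_of_nonneg_left (hW hu hac) hk0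
    rcases le_total R ‖z - y‖ with hv | hv
    · have hG := mul_le_mul_of_nonneg_right (hGK.trans (hcv hv).ge) hxy0
      have h1 := mul_nonneg hm0 hxz0
      linarith
    · have hG := mul_le_mul_of_nonneg_right hsub hxy0
      linarith [hD (hvk hv)]
end

section
/- Let d ≥ 1, m > 0, b ≥ 0, M > 0, and let f : ℝ^d → ℝ be differentiable, (m,b)-dissipative, and M-smooth. Then for all x, y ∈ ℝ^d, f(x) − f(y) ≤ M·‖x − y‖·(√(b/m) + ‖x‖/2 + ‖y‖/2). -/
open RealInnerProductSpace

/-!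
Dissipativity forces a critical point `z` of `f` with `‖z‖ ≤ √(b/m)`: a minimiser `z` of `f` over
the ball of radius `√(b/m) + 1` satisfies `⟪z, ∇f z⟫ ≤ 0`, since moving towards the origin cannot
decrease `f`; dissipativity then gives `m ‖z‖² ≤ b`, so `z` is interior and `∇f z = 0`
(`exists_gradient_eq_zero`). Smoothness gives `‖∇f w‖ ≤ M ‖w - z‖ ≤ M (‖w‖ + √(b/m))`, and
integrating this linear bound along the segment from `y` to `x` gives the estimate
(`sub_le_of_gradient_norm_le`).
-/

theorem exists_gradient_eq_zero {d : ℕ} {m b : ℝ} (hm : 0 < m)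
    {f : EuclideanSpace ℝ (Fin d) → ℝ} (hdiff : Differentiable ℝ f)
    (hdiss : ∀ x : EuclideanSpace ℝ (Fin d), ⟪x, gradient f x⟫ ≥ m * ‖x‖ ^ 2 - b) :
    ∃ z, gradient f z = 0 ∧ ‖z‖ ≤ Real.sqrt (b / m) := by
  set R := Real.sqrt (b / m) with hR
  have hR0 : 0 ≤ R := Real.sqrt_nonneg _
  have h0 : (0 : EuclideanSpace ℝ (Fin d)) ∈ Metric.closedBall 0 (R + 1) := by
    simp only [Metric.mem_closedBall, dist_self]; positivity
  obtain ⟨z, hz, hmin⟩ := (isCompact_closedBall (0 : EuclideanSpace ℝ (Fin d)) (R + 1)).exists_isMinOn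
    ⟨0, h0⟩ hdiff.continuous.continuousOn
  have hgrad := (hdiff z).hasGradientAt.hasFDerivAt
  -- The direction `-z` points into the ball, so the derivative of `f` along it is nonnegative.
  have hcone : 0 - z ∈ posTangentConeAt (Metric.closedBall 0 (R + 1)) z :=
    sub_mem_posTangentConeAt_of_segment_subset ((convex_closedBall _ _).segment_subset hz h0)
  have hinward := hmin.localize.hasFDerivWithinAt_nonneg hgrad.hasFDerivWithinAt hcone
  have hinner : ⟪z, gradient f z⟫ ≤ 0 := by
    rw [real_inner_comm]
    simpa using hinward
  have hzR : ‖z‖ ≤ R := by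
    apply Real.le_sqrt_of_sq_le
    rw [le_div_iff₀ hm]
    linarith [hdiss z]
  refine ⟨z, ?_, hzR⟩
  have hloc : IsLocalMin f z := by
    refine hmin.isLocalMin (Filter.mem_of_superset (Metric.isOpen_ball.mem_nhds ?_)
      Metric.ball_subset_closedBall)
    rw [mem_ball_zero_iff]; linarith
  simp [gradient, hloc.fderiv_eq_zero]

/-- Integrated form of a linear growth bound on the gradient; the integral along the segment is
replaced by monotonicity of the difference with the explicit antiderivative. -/
theorem sub_le_of_gradient_norm_le {d : ℕ} {M R : ℝ} (hM : 0 ≤ M)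
    {f : EuclideanSpace ℝ (Fin d) → ℝ} (hdiff : Differentiable ℝ f)
    (hgrowth : ∀ w, ‖gradient f w‖ ≤ M * (‖w‖ + R)) (x y : EuclideanSpace ℝ (Fin d)) :
    f x - f y ≤ M * ‖x - y‖ * (R + ‖x‖ / 2 + ‖y‖ / 2) := by
  -- The subtracted term is the antiderivative of `M * ‖x - y‖ * (R + t * ‖x‖ + (1 - t) * ‖y‖)`.
  let g : ℝ → ℝ := fun t => f (y + t • (x - y)) -
    M * ‖x - y‖ * (R * t + ‖x‖ * (t ^ 2 / 2) + ‖y‖ * (t - t ^ 2 / 2))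
  have hg : ∀ t, HasDerivAt g (⟪gradient f (y + t • (x - y)), x - y⟫ -
      M * ‖x - y‖ * (R + ‖x‖ * t + ‖y‖ * (1 - t))) t := by
    intro t
    have hline : HasDerivAt (fun t : ℝ => y + t • (x - y)) (x - y) t := by
      simpa using ((hasDerivAt_id t).smul_const (x - y)).const_add y
    have hcomp := (hdiff (y + t • (x - y))).hasGradientAt.hasFDerivAt.comp_hasDerivAt t hline
    have hsq : HasDerivAt (fun t : ℝ => t ^ 2 / 2) t t := by
      simpa using (hasDerivAt_pow 2 t).div_const 2
    have hpoly := ((((hasDerivAt_id t).const_mul R).add (hsq.const_mul ‖x‖)).add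
      (((hasDerivAt_id t).sub hsq).const_mul ‖y‖)).const_mul (M * ‖x - y‖)
    refine (hcomp.sub hpoly).congr_deriv ?_
    simp
  have hanti : AntitoneOn g (Set.Icc 0 1) := by
    refine antitoneOn_of_hasDerivWithinAt_nonpos (convex_Icc 0 1)
      (fun t _ => (hg t).continuousAt.continuousWithinAt)
      (fun t _ => (hg t).hasDerivWithinAt) fun t ht => ?_
    rw [interior_Icc] at ht
    have hnorm : ‖y + t • (x - y)‖ ≤ ‖x‖ * t + ‖y‖ * (1 - t) := by
      have hrw : y + t • (x - y) = t • x + (1 - t) • y := by module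
      rw [hrw]
      refine (norm_add_le _ _).trans_eq ?_
      rw [norm_smul, norm_smul, Real.norm_of_nonneg ht.1.le,
        Real.norm_of_nonneg (sub_nonneg.2 ht.2.le)]
      ring
    rw [sub_nonpos]
    calc ⟪gradient f (y + t • (x - y)), x - y⟫
        ≤ ‖gradient f (y + t • (x - y))‖ * ‖x - y‖ := real_inner_le_norm _ _
      _ ≤ M * ((‖x‖ * t + ‖y‖ * (1 - t)) + R) * ‖x - y‖ := by
          gcongr
          exact (hgrowth _).trans (by gcongr)
      _ = _ := by ring
  have h01 := hanti (Set.left_mem_Icc.2 zero_le_one) (Set.right_mem_Icc.2 zero_le_one) zero_le_one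
  simp only [g, one_smul, zero_smul, add_zero, add_sub_cancel] at h01
  linarith

/-- Quadratic-growth continuity estimate for a differentiable,
`(m, b)`-dissipative, `M`-smooth function:
`f(x) − f(y) ≤ M ‖x − y‖ (√(b/m) + ‖x‖/2 + ‖y‖/2)`. -/
theorem dissipative_smooth_function_diff_bound
    (d : ℕ) (hd : 1 ≤ d) (m b M : ℝ) (hm : 0 < m) (hb : 0 ≤ b) (hM : 0 < M)
    (f : EuclideanSpace ℝ (Fin d) → ℝ)
    (hdiff : Differentiable ℝ f)
    (hdiss : ∀ x : EuclideanSpace ℝ (Fin d), ⟪x, gradient f x⟫ ≥ m * ‖x‖ ^ 2 - b)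
    (hsmooth : ∀ x y : EuclideanSpace ℝ (Fin d),
      ‖gradient f x - gradient f y‖ ≤ M * ‖x - y‖) :
    ∀ x y : EuclideanSpace ℝ (Fin d),
      f x - f y ≤ M * ‖x - y‖ * (Real.sqrt (b / m) + ‖x‖ / 2 + ‖y‖ / 2) := by
  obtain ⟨z, hz0, hz⟩ := exists_gradient_eq_zero hm hdiff hdiss
  refine sub_le_of_gradient_norm_le hM.le hdiff fun w => ?_
  have h := hsmooth w z
  rw [hz0, sub_zero] at h
  refine h.trans ?_
  gcongr
  exact (norm_sub_le _ _).trans (by gcongr)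
end
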